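/- Let λ > 0 and let u : [0,T] × ℝ² → ℝ² be smooth, 2π-periodic in each spatial coordinate, and a pointwise solution of the 2D Kuramoto–Sivashinsky equation ∂ₜu + (u·∇)u = −Δ²u − λΔu. Let ū(t) = (2π)⁻² ∫_Ω u(t,x) dx and ũ = u − ū. Then sup_{0 ≤ t ≤ T} |ū(t)| ≤ |ū(0)| + (1/(8π²)) ∫₀ᵀ ( ‖ũ(s)‖²_{L²(Ω)} + ‖∇ũ(s)‖²_{L²(Ω)} ) ds. -/

import Mathlib

/-! The mean value satisfies `(2π)² ū' = -∫_Ω (u·∇)u`, because `Δ²u` and `Δu` are sums of derivatives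
of periodic functions and integrate to zero over the period cell (`SmoothPer.integral_pd1`,
`SmoothPer.integral_pd2`, `SmoothPer.integral_lap`). For the same reason `∫_Ω (ū·∇)u = 0`, so that
`(2π)² ū' = -∫_Ω (ũ·∇)ũ` (`integral_time_deriv`).

The pointwise bound `|(ũ·∇)ũ| ≤ ½ (|ũ|² + |∇ũ|²)` is used tested against a vector `(a, b)` of length at
most one (`pointwise_bound`, `projected_rate_le`). Integrating in time and choosing `(a, b)` as the
direction of `ū(t)` gives the estimate for `|ū(t)|`, with constant `½ (2π)⁻² = 1/(8π²)`. -/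

open Real MeasureTheory Set intervalIntegral
open scoped Real Classical

noncomputable section

/-- Partial derivative in the first spatial coordinate. -/
def pd1 (f : ℝ × ℝ → ℝ) (x : ℝ × ℝ) : ℝ := deriv (fun s => f (s, x.2)) x.1

/-- Partial derivative in the second spatial coordinate. -/
def pd2 (f : ℝ × ℝ → ℝ) (x : ℝ × ℝ) : ℝ := deriv (fun s => f (x.1, s)) x.2

/-- Advective derivative `(v·∇)f = v¹ ∂₁f + v² ∂₂f`. -/
def adv (v : ℝ × ℝ → ℝ × ℝ) (f : ℝ × ℝ → ℝ) (x : ℝ × ℝ) : ℝ :=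
  (v x).1 * pd1 f x + (v x).2 * pd2 f x

/-- Divergence `∇·v = ∂₁v¹ + ∂₂v²`. -/
def divg (v : ℝ × ℝ → ℝ × ℝ) (x : ℝ × ℝ) : ℝ :=
  pd1 (fun y => (v y).1) x + pd2 (fun y => (v y).2) x

/-- Scalar curl `∇⊥·v = ∂₁v² − ∂₂v¹`. -/
def curl2 (v : ℝ × ℝ → ℝ × ℝ) (x : ℝ × ℝ) : ℝ :=
  pd1 (fun y => (v y).2) x - pd2 (fun y => (v y).1) x

/-- Laplacian `Δf = ∂₁²f + ∂₂²f`. -/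
def lap (f : ℝ × ℝ → ℝ) : ℝ × ℝ → ℝ := fun x => pd1 (pd1 f) x + pd2 (pd2 f) x

/-- `|∇v|² = Σ_{i,j} (∂ᵢvʲ)²`. -/
def gradNormSq (v : ℝ × ℝ → ℝ × ℝ) (x : ℝ × ℝ) : ℝ :=
  (pd1 (fun y => (v y).1) x)^2 + (pd2 (fun y => (v y).1) x)^2 +
  (pd1 (fun y => (v y).2) x)^2 + (pd2 (fun y => (v y).2) x)^2

/-- The periodic box `Ω = [0,2π]²`. -/
def Omega2 : Set (ℝ × ℝ) := Set.Icc (0:ℝ) (2*π) ×ˢ Set.Icc (0:ℝ) (2*π)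

/-- `2π`-periodicity in each coordinate for a vector field. -/
def Periodic2 (f : ℝ × ℝ → ℝ × ℝ) : Prop :=
  ∀ x : ℝ × ℝ, f (x.1 + 2*π, x.2) = f x ∧ f (x.1, x.2 + 2*π) = f x

/-- Squared `L²(Ω)` norm of a vector field. -/
def l2sq (v : ℝ × ℝ → ℝ × ℝ) : ℝ := ∫ x in Omega2, ((v x).1^2 + (v x).2^2)

/-- Squared `L²(Ω)` norm of `Δv`. -/
def l2sqLap (v : ℝ × ℝ → ℝ × ℝ) : ℝ :=
  ∫ x in Omega2, ((lap (fun y => (v y).1) x)^2 + (lap (fun y => (v y).2) x)^2)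

/-- `ℓ`-th Fourier coefficient of a scalar field. -/
def fc (f : ℝ × ℝ → ℝ) (ℓ : ℤ × ℤ) : ℂ :=
  ((2*π)^2)⁻¹ • ∫ x in Omega2,
    (f x : ℂ) * Complex.exp (-(Complex.I) * ((ℓ.1:ℂ) * (x.1:ℂ) + (ℓ.2:ℂ) * (x.2:ℂ)))

/-- `ℓ`-th Fourier coefficient of a vector field. -/
def fcVec (v : ℝ × ℝ → ℝ × ℝ) (ℓ : ℤ × ℤ) : ℂ × ℂ :=
  (fc (fun y => (v y).1) ℓ, fc (fun y => (v y).2) ℓ)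

/-- `|v̂_ℓ|²`. -/
def coefAbsSq (v : ℝ × ℝ → ℝ × ℝ) (ℓ : ℤ × ℤ) : ℝ :=
  ‖fc (fun y => (v y).1) ℓ‖^2 + ‖fc (fun y => (v y).2) ℓ‖^2

/-- Squared homogeneous Sobolev norm `‖v‖²_{Ḣ^κ} = (2π)² Σ_{ℓ≠0} |ℓ|^{2κ}|v̂_ℓ|²`. -/
def hnormSq (v : ℝ × ℝ → ℝ × ℝ) (κ : ℝ) : ℝ :=
  (2*π)^2 * ∑' ℓ : ℤ × ℤ,
    if ℓ = 0 then 0 else ((ℓ.1:ℝ)^2 + (ℓ.2:ℝ)^2) ^ κ * coefAbsSq v ℓ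

/-- Homogeneous Sobolev norm `‖v‖_{Ḣ^κ}`. -/
def hnorm (v : ℝ × ℝ → ℝ × ℝ) (κ : ℝ) : ℝ := Real.sqrt (hnormSq v κ)

/-- Projection onto Fourier modes with `|ℓ| ≤ N` (scalar fields). -/
def PN (N : ℝ) (f : ℝ × ℝ → ℝ) (x : ℝ × ℝ) : ℝ :=
  ∑' ℓ : ℤ × ℤ,
    if ((ℓ.1:ℝ)^2 + (ℓ.2:ℝ)^2) ≤ N^2 then
      (fc f ℓ * Complex.exp (Complex.I * ((ℓ.1:ℂ) * (x.1:ℂ) + (ℓ.2:ℂ) * (x.2:ℂ)))).re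
    else 0

/-- Projection onto Fourier modes with `|ℓ| ≤ N` (vector fields). -/
def PNvec (N : ℝ) (v : ℝ × ℝ → ℝ × ℝ) (x : ℝ × ℝ) : ℝ × ℝ :=
  (PN N (fun y => (v y).1) x, PN N (fun y => (v y).2) x)

/-- High-mode part `(I − P_N)v`. -/
def highN (N : ℝ) (v : ℝ × ℝ → ℝ × ℝ) (x : ℝ × ℝ) : ℝ × ℝ := v x - PNvec N v x

/-- `(v·∇)w` as a vector field. -/
def advVec (v w : ℝ × ℝ → ℝ × ℝ) (x : ℝ × ℝ) : ℝ × ℝ :=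
  (adv v (fun y => (w y).1) x, adv v (fun y => (w y).2) x)

/-- Laplacian of a vector field. -/
def lapVec (v : ℝ × ℝ → ℝ × ℝ) (x : ℝ × ℝ) : ℝ × ℝ :=
  (lap (fun y => (v y).1) x, lap (fun y => (v y).2) x)

/-- Spatial mean `(2π)⁻² ∫_Ω v`. -/
def meanOf (v : ℝ × ℝ → ℝ × ℝ) : ℝ × ℝ := ((2*π)^2)⁻¹ • ∫ x in Omega2, v x

/-- Joint smoothness in `(t,x)`. -/
def SmoothTS (u : ℝ → ℝ × ℝ → ℝ × ℝ) : Prop :=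
  ∀ n : ℕ, ContDiff ℝ n (fun p : ℝ × (ℝ × ℝ) => u p.1 p.2)

/-- The 2D inviscid Burgers equation `∂ₜu + (u·∇)u = 0` on `[0,T] × ℝ²`. -/
def IsBurgers (T : ℝ) (u : ℝ → ℝ × ℝ → ℝ × ℝ) : Prop :=
  ∀ t ∈ Set.Icc (0:ℝ) T, ∀ x : ℝ × ℝ,
    deriv (fun s => (u s x).1) t + adv (u t) (fun y => (u t y).1) x = 0 ∧
    deriv (fun s => (u s x).2) t + adv (u t) (fun y => (u t y).2) x = 0

/-- The 2D Kuramoto–Sivashinsky equation `∂ₜu + (u·∇)u = −Δ²u − λΔu` on `[0,T] × ℝ²`. -/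
def IsKSE (lam T : ℝ) (u : ℝ → ℝ × ℝ → ℝ × ℝ) : Prop :=
  ∀ t ∈ Set.Icc (0:ℝ) T, ∀ x : ℝ × ℝ,
    deriv (fun s => (u s x).1) t + adv (u t) (fun y => (u t y).1) x
      = -(lap (lap (fun y => (u t y).1)) x) - lam * lap (fun y => (u t y).1) x ∧
    deriv (fun s => (u s x).2) t + adv (u t) (fun y => (u t y).2) x
      = -(lap (lap (fun y => (u t y).2)) x) - lam * lap (fun y => (u t y).2) x

open scoped ContDiff

/-! ### Smooth periodic scalar fields -/

/-- A smooth scalar field on the plane, `2π`-periodic in each coordinate. -/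
structure SmoothPer (f : ℝ × ℝ → ℝ) : Prop where
  smooth : ContDiff ℝ ∞ f
  per1 : ∀ a b, f (a + 2*π, b) = f (a, b)
  per2 : ∀ a b, f (a, b + 2*π) = f (a, b)

lemma hasDerivAt_fst {f : ℝ × ℝ → ℝ} (hf : ContDiff ℝ ∞ f) (a b : ℝ) :
    HasDerivAt (fun s => f (s, b)) (fderiv ℝ f (a, b) (1, 0)) a :=
  ((hf.differentiable (by simp)) (a, b)).hasFDerivAt.comp_hasDerivAt a
    ((hasDerivAt_id a).prodMk (hasDerivAt_const a b))

lemma hasDerivAt_snd {f : ℝ × ℝ → ℝ} (hf : ContDiff ℝ ∞ f) (a b : ℝ) :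
    HasDerivAt (fun s => f (a, s)) (fderiv ℝ f (a, b) (0, 1)) b :=
  ((hf.differentiable (by simp)) (a, b)).hasFDerivAt.comp_hasDerivAt b
    ((hasDerivAt_const b a).prodMk (hasDerivAt_id b))

lemma pd1_eq {f : ℝ × ℝ → ℝ} (hf : ContDiff ℝ ∞ f) : pd1 f = fun x => fderiv ℝ f x (1, 0) :=
  funext fun x => (hasDerivAt_fst hf x.1 x.2).deriv

lemma pd2_eq {f : ℝ × ℝ → ℝ} (hf : ContDiff ℝ ∞ f) : pd2 f = fun x => fderiv ℝ f x (0, 1) :=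
  funext fun x => (hasDerivAt_snd hf x.1 x.2).deriv

lemma contDiff_fderiv_apply {E : Type*} [NormedAddCommGroup E] [NormedSpace ℝ E] {f : E → ℝ}
    (hf : ContDiff ℝ ∞ f) (v : E) : ContDiff ℝ ∞ (fun x => fderiv ℝ f x v) :=
  (hf.fderiv_right (by simp)).clm_apply contDiff_const

lemma SmoothPer.pd1 {f : ℝ × ℝ → ℝ} (hf : SmoothPer f) : SmoothPer (pd1 f) where
  smooth := by rw [pd1_eq hf.smooth]; exact contDiff_fderiv_apply hf.smooth _
  per1 a b := by
    simp only [_root_.pd1]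
    rw [← deriv_comp_add_const]
    simp only [hf.per1]
  per2 a b := by simp only [_root_.pd1, hf.per2]

lemma SmoothPer.pd2 {f : ℝ × ℝ → ℝ} (hf : SmoothPer f) : SmoothPer (pd2 f) where
  smooth := by rw [pd2_eq hf.smooth]; exact contDiff_fderiv_apply hf.smooth _
  per1 a b := by simp only [_root_.pd2, hf.per1]
  per2 a b := by
    simp only [_root_.pd2]
    rw [← deriv_comp_add_const]
    simp only [hf.per2]

lemma SmoothPer.lap {f : ℝ × ℝ → ℝ} (hf : SmoothPer f) : SmoothPer (lap f) where
  smooth := hf.pd1.pd1.smooth.add hf.pd2.pd2.smooth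
  per1 a b := by simp only [_root_.lap, hf.pd1.pd1.per1, hf.pd2.pd2.per1]
  per2 a b := by simp only [_root_.lap, hf.pd1.pd1.per2, hf.pd2.pd2.per2]

lemma isCompact_Omega2 : IsCompact Omega2 := isCompact_Icc.prod isCompact_Icc

lemma integrableOn_Omega2 {E : Type*} [NormedAddCommGroup E] {f : ℝ × ℝ → E} (hf : Continuous f) :
    IntegrableOn f Omega2 :=
  hf.continuousOn.integrableOn_compact isCompact_Omega2

lemma SmoothPer.integral_pd2 {f : ℝ × ℝ → ℝ} (hf : SmoothPer f) : ∫ x in Omega2, _root_.pd2 f x = 0 := by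
  have hc := hf.pd2.smooth.continuous
  have h2 : (0:ℝ) ≤ 2*π := by positivity
  have hi := integrableOn_Omega2 hc
  rw [Omega2, Measure.volume_eq_prod, setIntegral_prod _ (by rwa [← Measure.volume_eq_prod])]
  refine (MeasureTheory.integral_congr_ae (Filter.Eventually.of_forall fun a => ?_)).trans (integral_zero' ℝ ℝ)
  simp only [Pi.zero_apply]
  rw [integral_Icc_eq_integral_Ioc, ← intervalIntegral.integral_of_le h2]
  have : ∀ b, HasDerivAt (fun s => f (a, s)) (_root_.pd2 f (a, b)) b := fun b => by
    rw [pd2_eq hf.smooth]; exact hasDerivAt_snd hf.smooth a b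
  rw [intervalIntegral.integral_eq_sub_of_hasDerivAt (fun b _ => this b)
    (Continuous.intervalIntegrable (by fun_prop) _ _)]
  have := hf.per2 a 0
  rw [zero_add] at this
  rw [this, sub_self]

lemma SmoothPer.integral_pd1 {f : ℝ × ℝ → ℝ} (hf : SmoothPer f) : ∫ x in Omega2, _root_.pd1 f x = 0 := by
  have hs : SmoothPer (fun z => f z.swap) :=
    ⟨hf.smooth.comp (contDiff_snd.prodMk contDiff_fst), fun a b => hf.per2 b a,
      fun a b => hf.per1 b a⟩
  have := hs.integral_pd2
  rw [Omega2, Measure.volume_eq_prod] at this ⊢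
  rw [← setIntegral_prod_swap]
  exact this

lemma SmoothPer.integral_lap {f : ℝ × ℝ → ℝ} (hf : SmoothPer f) : ∫ x in Omega2, _root_.lap f x = 0 := by
  simp only [_root_.lap]
  rw [integral_add (integrableOn_Omega2 hf.pd1.pd1.smooth.continuous)
    (integrableOn_Omega2 hf.pd2.pd2.smooth.continuous), hf.pd1.integral_pd1, hf.pd2.integral_pd2,
    add_zero]

/-! ### Dependence on time -/

/-- Fundamental theorem of calculus in time, integrated over `Ω`. -/
lemma integral_sub_eq {U : ℝ × (ℝ × ℝ) → ℝ} (hU : ContDiff ℝ ∞ U) (t : ℝ) :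
    (∫ x in Omega2, U (t, x)) - ∫ x in Omega2, U (0, x)
      = ∫ s in (0:ℝ)..t, ∫ x in Omega2, deriv (fun r => U (r, x)) s := by
  have hd : ∀ s x, HasDerivAt (fun r => U (r, x)) (fderiv ℝ U (s, x) (1, 0)) s := fun s x =>
    ((hU.differentiable (by simp)) (s, x)).hasFDerivAt.comp_hasDerivAt s
      ((hasDerivAt_id s).prodMk (hasDerivAt_const s x))
  have hc := (contDiff_fderiv_apply hU (1, 0)).continuous
  have hUc := hU.continuous
  simp only [(hd _ _).deriv]
  rw [intervalIntegral_integral_swap, ← integral_sub (integrableOn_Omega2 (by fun_prop))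
    (integrableOn_Omega2 (by fun_prop))]
  · refine MeasureTheory.integral_congr_ae (Filter.Eventually.of_forall fun x => ?_)
    simp only
    rw [intervalIntegral.integral_eq_sub_of_hasDerivAt (fun s _ => hd s x)
      (Continuous.intervalIntegrable (by fun_prop) _ _)]
  · rw [Measure.prod_restrict, ← Measure.volume_eq_prod]
    exact ((hc.continuousOn.integrableOn_compact
      (isCompact_uIcc.prod isCompact_Omega2))).mono_set
        (prod_mono uIoc_subset_uIcc subset_rfl)

lemma continuous_pd1_time {U : ℝ × (ℝ × ℝ) → ℝ} (hU : ContDiff ℝ ∞ U) :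
    Continuous fun p : ℝ × (ℝ × ℝ) => pd1 (fun y => U (p.1, y)) p.2 := by
  have hd : ∀ p : ℝ × (ℝ × ℝ), pd1 (fun y => U (p.1, y)) p.2 = fderiv ℝ U p (0, (1, 0)) := fun p =>
    HasDerivAt.deriv (((hU.differentiable (by simp)) p).hasFDerivAt.comp_hasDerivAt p.2.1
      ((hasDerivAt_const _ p.1).prodMk ((hasDerivAt_id _).prodMk (hasDerivAt_const _ p.2.2))))
  simp only [hd]
  exact (contDiff_fderiv_apply hU _).continuous

lemma continuous_pd2_time {U : ℝ × (ℝ × ℝ) → ℝ} (hU : ContDiff ℝ ∞ U) :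
    Continuous fun p : ℝ × (ℝ × ℝ) => pd2 (fun y => U (p.1, y)) p.2 := by
  have hd : ∀ p : ℝ × (ℝ × ℝ), pd2 (fun y => U (p.1, y)) p.2 = fderiv ℝ U p (0, (0, 1)) := fun p =>
    HasDerivAt.deriv (((hU.differentiable (by simp)) p).hasFDerivAt.comp_hasDerivAt p.2.2
      ((hasDerivAt_const _ p.1).prodMk ((hasDerivAt_const _ p.2.1).prodMk (hasDerivAt_id _))))
  simp only [hd]
  exact (contDiff_fderiv_apply hU _).continuous

lemma gradNormSq_sub_const (v : ℝ × ℝ → ℝ × ℝ) (m : ℝ × ℝ) :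
    gradNormSq (fun y => v y - m) = gradNormSq v := by
  funext x
  simp only [gradNormSq, pd1, pd2, Prod.fst_sub, Prod.snd_sub, deriv_sub_const]

lemma meanOf_fst {v : ℝ × ℝ → ℝ × ℝ} (hv : Continuous v) :
    (meanOf v).1 = ((2*π)^2)⁻¹ * ∫ x in Omega2, (v x).1 := by
  rw [meanOf, Prod.smul_fst, fst_integral (integrableOn_Omega2 hv), smul_eq_mul]

lemma meanOf_snd {v : ℝ × ℝ → ℝ × ℝ} (hv : Continuous v) :
    (meanOf v).2 = ((2*π)^2)⁻¹ * ∫ x in Omega2, (v x).2 := by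
  rw [meanOf, Prod.smul_snd, snd_integral (integrableOn_Omega2 hv), smul_eq_mul]

/-- The squared `H¹` norm of the fluctuation `v - v̄`. -/
def fluctH1 (v : ℝ × ℝ → ℝ × ℝ) : ℝ :=
  l2sq (fun x => v x - meanOf v) + ∫ x in Omega2, gradNormSq (fun y => v y - meanOf v) x

lemma fluctH1_nonneg (v : ℝ × ℝ → ℝ × ℝ) : 0 ≤ fluctH1 v :=
  add_nonneg (integral_nonneg fun x => by positivity)
    (integral_nonneg fun x => by simp only [gradNormSq, Pi.zero_apply]; positivity)

/-- Without this continuity the Bochner integral on the right of the estimate could be the junk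
value `0`. -/
lemma continuous_fluctH1 {u : ℝ → ℝ × ℝ → ℝ × ℝ}
    (hu : ContDiff ℝ ∞ fun p : ℝ × (ℝ × ℝ) => u p.1 p.2) :
    Continuous fun s => fluctH1 (u s) := by
  have hc := hu.continuous
  have hm : Continuous fun s => meanOf (u s) := by
    unfold meanOf
    exact (continuous_parametric_integral_of_continuous (μ := volume) (f := u)
      hc isCompact_Omega2).const_smul (((2*π)^2)⁻¹ : ℝ)
  unfold fluctH1 l2sq
  simp only [gradNormSq_sub_const]
  refine (continuous_parametric_integral_of_continuous
    (f := fun s x => ((u s x - meanOf (u s)).1)^2 + ((u s x - meanOf (u s)).2)^2) ?_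
    isCompact_Omega2).add (continuous_parametric_integral_of_continuous
    (f := fun s x => gradNormSq (u s) x) ?_ isCompact_Omega2)
  · have hw : Continuous fun p : ℝ × (ℝ × ℝ) => u p.1 p.2 - meanOf (u p.1) :=
      hc.sub (hm.comp continuous_fst)
    exact (hw.fst.pow 2).add (hw.snd.pow 2)
  · have h1 := continuous_pd1_time hu.fst
    have h2 := continuous_pd2_time hu.fst
    have h3 := continuous_pd1_time hu.snd
    have h4 := continuous_pd2_time hu.snd
    simp only [Function.uncurry_def, gradNormSq]
    fun_prop

/-! ### The rate of change of the mean -/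

/-- The linear terms and the transport by the constant field `m` drop out on integrating over `Ω`. -/
lemma integral_time_deriv {lam : ℝ} {f d : ℝ × ℝ → ℝ} (hf : SmoothPer f) {v : ℝ × ℝ → ℝ × ℝ}
    (hv : Continuous v) (m : ℝ × ℝ)
    (hd : ∀ x, d x + adv v f x = -(lap (lap f) x) - lam * lap f x) :
    ∫ x in Omega2, d x = ∫ x in Omega2, -adv (fun y => v y - m) f x := by
  have c1 := hf.pd1.smooth.continuous
  have c2 := hf.pd2.smooth.continuous
  have c3 := hf.lap.smooth.continuous
  have c4 := hf.lap.lap.smooth.continuous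
  have hd' : ∀ x, d x = -adv (fun y => v y - m) f x
      + (-(m.1 * pd1 f x) + (-(m.2 * pd2 f x) + (-(lap (lap f) x) + -(lam * lap f x)))) := fun x => by
    have := hd x
    simp only [adv, Prod.fst_sub, Prod.snd_sub] at this ⊢
    linarith
  simp only [hd']
  rw [integral_add (integrableOn_Omega2 (by unfold adv; fun_prop)) (integrableOn_Omega2 (by fun_prop)),
    integral_add (integrableOn_Omega2 (by fun_prop)) (integrableOn_Omega2 (by fun_prop)),
    integral_add (integrableOn_Omega2 (by fun_prop)) (integrableOn_Omega2 (by fun_prop)),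
    integral_add (integrableOn_Omega2 (by fun_prop)) (integrableOn_Omega2 (by fun_prop))]
  simp only [MeasureTheory.integral_neg, MeasureTheory.integral_const_mul, hf.integral_pd1, hf.integral_pd2, hf.integral_lap,
    hf.lap.integral_lap]
  simp

/-- The inequality `-(a,b)·(z·∇)z ≤ ½ (|z|² + |∇z|²)` for `|(a,b)| ≤ 1`, where `z = (v, w)` and `(p, q)`,
`(r, s)` are the gradients of its two components. -/
lemma pointwise_bound {a b : ℝ} (hab : a^2 + b^2 ≤ 1) (v w p q r s : ℝ) :
    a * -(v*p + w*q) + b * -(v*r + w*s) ≤ 1/2 * ((v^2 + w^2) + (p^2 + q^2 + r^2 + s^2)) := by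
  have h1 : (a*p + b*r)^2 ≤ p^2 + r^2 := by
    nlinarith [sq_nonneg (a*r - b*p), mul_nonneg (sub_nonneg.2 hab) (add_nonneg (sq_nonneg p) (sq_nonneg r))]
  have h2 : (a*q + b*s)^2 ≤ q^2 + s^2 := by
    nlinarith [sq_nonneg (a*s - b*q), mul_nonneg (sub_nonneg.2 hab) (add_nonneg (sq_nonneg q) (sq_nonneg s))]
  nlinarith [sq_nonneg (v + (a*p + b*r)), sq_nonneg (w + (a*q + b*s))]

/-- The component of `(2π)² ū'` along `(a, b)` is at most half the squared `H¹` norm of `ũ`; here `d₁`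
and `d₂` stand for the time derivatives of the components of `v = u(t)`. -/
lemma projected_rate_le {lam : ℝ} {v : ℝ × ℝ → ℝ × ℝ} {d₁ d₂ : ℝ × ℝ → ℝ}
    (h1 : SmoothPer fun y => (v y).1) (h2 : SmoothPer fun y => (v y).2)
    (hd1 : ∀ x, d₁ x + adv v (fun y => (v y).1) x
      = -(lap (lap fun y => (v y).1) x) - lam * lap (fun y => (v y).1) x)
    (hd2 : ∀ x, d₂ x + adv v (fun y => (v y).2) x
      = -(lap (lap fun y => (v y).2) x) - lam * lap (fun y => (v y).2) x)
    {a b : ℝ} (hab : a^2 + b^2 ≤ 1) :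
    a * (∫ x in Omega2, d₁ x) + b * (∫ x in Omega2, d₂ x) ≤ 1/2 * fluctH1 v := by
  have hv : Continuous v := h1.smooth.continuous.prodMk h2.smooth.continuous
  have c1 := h1.pd1.smooth.continuous
  have c2 := h1.pd2.smooth.continuous
  have c3 := h2.pd1.smooth.continuous
  have c4 := h2.pd2.smooth.continuous
  rw [integral_time_deriv h1 hv (meanOf v) hd1, integral_time_deriv h2 hv (meanOf v) hd2, fluctH1,
    gradNormSq_sub_const, l2sq, ← integral_add (integrableOn_Omega2 (by fun_prop))
      (integrableOn_Omega2 (by unfold gradNormSq; fun_prop)),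
    ← MeasureTheory.integral_const_mul, ← MeasureTheory.integral_const_mul,
    ← MeasureTheory.integral_const_mul,
    ← integral_add (integrableOn_Omega2 (by unfold adv; fun_prop))
      (integrableOn_Omega2 (by unfold adv; fun_prop))]
  refine integral_mono (integrableOn_Omega2 (by unfold adv; fun_prop))
    (integrableOn_Omega2 (by unfold gradNormSq; fun_prop)) fun x => ?_
  exact pointwise_bound hab _ _ _ _ _ _

/-- For a smooth periodic solution of the 2D KSE,
`sup_{0≤t≤T} |ū(t)| ≤ |ū(0)| + (1/(8π²)) ∫₀ᵀ (‖ũ(s)‖²_{L²} + ‖∇ũ(s)‖²_{L²}) ds`. -/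
theorem stmt9 (lam T : ℝ) (hlam : 0 < lam) (hT : 0 ≤ T)
    (u : ℝ → ℝ × ℝ → ℝ × ℝ) (hreg : SmoothTS u) (hper : ∀ t, Periodic2 (u t))
    (hKSE : IsKSE lam T u) :
    ∀ t ∈ Set.Icc (0:ℝ) T,
      Real.sqrt ((meanOf (u t)).1^2 + (meanOf (u t)).2^2)
        ≤ Real.sqrt ((meanOf (u 0)).1^2 + (meanOf (u 0)).2^2)
          + (1/(8*π^2)) *
            ∫ s in (0:ℝ)..T,
              (l2sq (fun x => u s x - meanOf (u s))
                + ∫ x in Omega2, gradNormSq (fun y => u s y - meanOf (u s)) x) := by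
  intro t ht
  have hu : ContDiff ℝ ∞ fun p : ℝ × (ℝ × ℝ) => u p.1 p.2 := contDiff_infty.2 hreg
  have hus : ∀ s, ContDiff ℝ ∞ (u s) := fun s => hu.comp (contDiff_const.prodMk contDiff_id)
  have hp1 : ∀ s, SmoothPer fun y => (u s y).1 := fun s =>
    ⟨(hus s).fst, fun a b => congrArg Prod.fst (hper s (a, b)).1,
      fun a b => congrArg Prod.fst (hper s (a, b)).2⟩
  have hp2 : ∀ s, SmoothPer fun y => (u s y).2 := fun s =>
    ⟨(hus s).snd, fun a b => congrArg Prod.snd (hper s (a, b)).1,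
      fun a b => congrArg Prod.snd (hper s (a, b)).2⟩
  have hN := continuous_fluctH1 hu
  change _ ≤ _ + (1/(8*π^2)) * ∫ s in (0:ℝ)..T, fluctH1 (u s)
  -- The rates `∫_Ω ∂ₜuⁱ(s)` are continuous in `s`, hence integrable in time.
  have hrate : ∀ {U : ℝ × (ℝ × ℝ) → ℝ}, ContDiff ℝ ∞ U →
      Continuous fun s => ∫ x in Omega2, deriv (fun r => U (r, x)) s := by
    intro U hU
    have hd : ∀ s x, deriv (fun r => U (r, x)) s = fderiv ℝ U (s, x) (1, 0) := fun s x =>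
      HasDerivAt.deriv (((hU.differentiable (by simp)) (s, x)).hasFDerivAt.comp_hasDerivAt s
        ((hasDerivAt_id s).prodMk (hasDerivAt_const s x)))
    simp only [hd]
    exact continuous_parametric_integral_of_continuous
      (f := fun s x => fderiv ℝ U (s, x) (1, 0))
      (contDiff_fderiv_apply hU (1, 0)).continuous isCompact_Omega2
  have hr1 := hrate hu.fst
  have hr2 := hrate hu.snd
  have e1 := integral_sub_eq hu.fst t
  have e2 := integral_sub_eq hu.snd t
  simp only at hr1 hr2 e1 e2
  have hproj : ∀ a b : ℝ, a^2 + b^2 ≤ 1 →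
      a * (meanOf (u t)).1 + b * (meanOf (u t)).2
        ≤ a * (meanOf (u 0)).1 + b * (meanOf (u 0)).2
          + (1/(8*π^2)) * ∫ s in (0:ℝ)..T, fluctH1 (u s) := by
    intro a b hab
    have hle : a * (∫ s in (0:ℝ)..t, ∫ x in Omega2, deriv (fun r => (u r x).1) s)
        + b * (∫ s in (0:ℝ)..t, ∫ x in Omega2, deriv (fun r => (u r x).2) s)
        ≤ 1/2 * ∫ s in (0:ℝ)..t, fluctH1 (u s) := by
      rw [← intervalIntegral.integral_const_mul, ← intervalIntegral.integral_const_mul,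
        ← intervalIntegral.integral_const_mul, ← intervalIntegral.integral_add
          ((hr1.const_mul a).intervalIntegrable _ _) ((hr2.const_mul b).intervalIntegrable _ _)]
      refine intervalIntegral.integral_mono_on ht.1
        (Continuous.intervalIntegrable (by fun_prop) _ _)
        (Continuous.intervalIntegrable (by fun_prop) _ _) fun s hs => ?_
      have hk := hKSE s ⟨hs.1, hs.2.trans ht.2⟩
      exact projected_rate_le (hp1 s) (hp2 s) (fun x => (hk x).1) (fun x => (hk x).2) hab
    have hmono : ∫ s in (0:ℝ)..t, fluctH1 (u s) ≤ ∫ s in (0:ℝ)..T, fluctH1 (u s) :=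
      intervalIntegral.integral_mono_interval le_rfl ht.1 ht.2
        (Filter.Eventually.of_forall fun s => fluctH1_nonneg (u s)) (hN.intervalIntegrable _ _)
    rw [meanOf_fst (hus t).continuous, meanOf_snd (hus t).continuous,
      meanOf_fst (hus 0).continuous, meanOf_snd (hus 0).continuous]
    rw [← e1, ← e2] at hle
    have hpi : (1/(8*π^2) : ℝ) = ((2*π)^2)⁻¹ * (1/2) := by field_simp; norm_num
    have := mul_le_mul_of_nonneg_left (hle.trans (mul_le_mul_of_nonneg_left hmono one_half_pos.le))
      (by positivity : (0:ℝ) ≤ ((2*π)^2)⁻¹)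
    rw [hpi]
    linarith
  set m := meanOf (u t)
  set n := meanOf (u 0)
  set R := Real.sqrt (m.1^2 + m.2^2) with hR
  have hRsq : R^2 = m.1^2 + m.2^2 := Real.sq_sqrt (by positivity)
  -- Division by zero makes `(a, b) = (0, 0)` when `R = 0`, which is still admissible.
  have hab : (m.1/R)^2 + (m.2/R)^2 ≤ 1 := by
    rw [div_pow, div_pow, ← add_div, ← hRsq]
    exact div_self_le_one _
  have hdir : m.1/R * m.1 + m.2/R * m.2 = R := by
    have : m.1/R * m.1 + m.2/R * m.2 = R^2 / R := by rw [hRsq]; ring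
    rw [this, pow_two, mul_self_div_self]
  have hCS : m.1/R * n.1 + m.2/R * n.2 ≤ Real.sqrt (n.1^2 + n.2^2) := by
    apply Real.le_sqrt_of_sq_le
    nlinarith [sq_nonneg (m.1/R * n.2 - m.2/R * n.1),
      mul_nonneg (sub_nonneg.2 hab) (add_nonneg (sq_nonneg n.1) (sq_nonneg n.2))]
  have := hproj _ _ hab
  rw [hdir] at this
  linarith
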